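/- In the Coxeter group W of type E6, for every integer l with 1 ≤ l ≤ 3, the identity x'_{6,1} · x'_{5,2} · x_{4,3} · x5 · x'_{6,l} · x5 = x4 · x'_{6,1} · x'_{5,2} · x_{4,3} · x5 · x'_{6,l} holds. -/

import Mathlib

/-- The descending product `x i * x (i-1) * ... * x j` (equal to `1` when `j > i`). -/
def descProd {G : Type*} [Group G] (x : ℤ → G) (i j : ℤ) : G :=
  ((List.range (i + 1 - j).toNat).map (fun n => x (i - (n : ℤ)))).prod

/-- The product `x i * x (i-2) * x (i-3) * ... * x j`, with the conventions
`primProd x i (i-1) = x i` and `primProd x i j = 1` for `j ≥ i`. -/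
def primProd {G : Type*} [Group G] (x : ℤ → G) (i j : ℤ) : G :=
  if i ≤ j then 1 else x i * descProd x (i - 2) j

/-!
The identity says that the word preceding the final `x5` on the left carries `x5` to `x4` under
conjugation. A braid relation `aba = bab` says that `ab` carries `a` to `b`; regrouping the word by
commutations alone lets one follow `x5` from right to left along the Dynkin diagram,
`x5 → x3 → x4 → x6 → x4`, every remaining letter commuting with the current generator. The
argument lives in the Artin group, and the arm `x3, x2, x1` of the diagram may have any length.
-/

/-- The braid relation of length three between `a` and `b`: the relation between the standard
generators attached to two nodes of a Dynkin diagram joined by a simple edge. -/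
def BraidRel {M : Type*} [Mul M] (a b : M) : Prop :=
  a * b * a = b * a * b

namespace BraidRel

theorem symm {M : Type*} [Mul M] {a b : M} (h : BraidRel a b) : BraidRel b a :=
  Eq.symm h

variable {S : Type*} [Semigroup S] {a b c d : S}

theorem semiconjBy (h : BraidRel a b) : SemiconjBy (a * b) a b :=
  h.trans (mul_assoc b a b)

theorem semiconjBy_path (hab : BraidRel a b) (hbc : BraidRel b c) (hcd : BraidRel c d)
    (hac : Commute a c) (had : Commute a d) (hbd : Commute b d) :
    SemiconjBy (c * b * a * (d * c * b)) a d := by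
  have regroup : c * b * a * (d * c * b) = c * d * (b * c) * (a * b) :=
    calc c * b * a * (d * c * b) = c * b * (a * d) * c * b := by simp only [mul_assoc]
      _ = c * (b * d) * (a * c) * b := by rw [had.eq]; simp only [mul_assoc]
      _ = c * d * (b * c) * (a * b) := by rw [hbd.eq, hac.eq]; simp only [mul_assoc]
  rw [regroup]
  exact (hcd.semiconjBy.mul_left hbc.semiconjBy).mul_left hab.semiconjBy

end BraidRel

section Products

variable {G : Type*} [Group G] {x : ℤ → G} {i j : ℤ} {g : G}

-- In `descProd` the annotation `(n : ℤ)` makes Lean coerce the whole list `List.range _` to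
-- `List ℤ` through a monadic bind; this is the form with the cast inside the function.
theorem descProd_eq_prod_map_range (x : ℤ → G) (i j : ℤ) :
    descProd x i j = ((List.range (i + 1 - j).toNat).map fun n : ℕ ↦ x (i - n)).prod := by
  simp [descProd, ← List.map_eq_flatMap, Function.comp_def]

theorem descProd_self (x : ℤ → G) (i : ℤ) : descProd x i i = x i := by
  simp [descProd_eq_prod_map_range]

theorem descProd_eq_mul (x : ℤ → G) (hji : j ≤ i) :
    descProd x i j = x i * descProd x (i - 1) j := by
  have length_eq : (i + 1 - j).toNat = (i - 1 + 1 - j).toNat + 1 := by omega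
  rw [descProd_eq_prod_map_range, descProd_eq_prod_map_range, length_eq, List.prod_range_succ']
  simp only [Nat.cast_zero, sub_zero, Nat.cast_succ, sub_sub, add_comm]

theorem primProd_eq_mul (x : ℤ → G) (hji : j < i) :
    primProd x i j = x i * descProd x (i - 2) j :=
  if_neg hji.not_ge

theorem commute_descProd (hg : ∀ k, j ≤ k → k ≤ i → Commute g (x k)) :
    Commute g (descProd x i j) := by
  rw [descProd_eq_prod_map_range]
  refine Commute.list_prod_right _ _ fun y hy ↦ ?_
  obtain ⟨n, hn, rfl⟩ := List.mem_map.mp hy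
  rw [List.mem_range] at hn
  exact hg _ (by omega) (by omega)

theorem commute_primProd (hg : ∀ k, j ≤ k → k ≤ i → k ≠ i - 1 → Commute g (x k)) :
    Commute g (primProd x i j) := by
  rcases le_or_gt i j with hij | hji
  · simp only [primProd, if_pos hij, Commute.one_right]
  · rw [primProd_eq_mul x hji]
    exact (hg i hji.le le_rfl (by omega)).mul_right
      (commute_descProd fun k hjk hki ↦ hg k hjk (by omega) (by omega))

theorem semiconjBy_primProd (hji : j ≤ i - 2) (hbraid : BraidRel (x i) (x (i - 2)))
    (hcomm : ∀ k, j ≤ k → k ≤ i - 3 → Commute (x i) (x k)) :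
    SemiconjBy (primProd x i j) (x i) (x (i - 2)) := by
  have tail : Commute (x i) (descProd x (i - 2 - 1) j) :=
    commute_descProd fun k hjk hki ↦ hcomm k hjk (by omega)
  rw [primProd_eq_mul x (by omega), descProd_eq_mul x hji, ← mul_assoc]
  exact hbraid.semiconjBy.mul_left tail.symm

end Products

section Diagram

variable {G : Type*} [Group G] {x : ℤ → G} {j k l m : ℤ}

theorem semiconjBy_descProd_mul_primProd (hl : l ≤ 3) (h53 : BraidRel (x 5) (x 3))
    (h34 : BraidRel (x 3) (x 4)) (h46 : BraidRel (x 4) (x 6))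
    (hcomm5 : ∀ i, l ≤ i → i ≤ 6 → i ≠ 3 → i ≠ 5 → Commute (x 5) (x i))
    (h36 : Commute (x 3) (x 6)) :
    SemiconjBy (descProd x 4 3 * x 5 * primProd x 6 l) (x 5) (x 6) := by
  have head : descProd x 4 3 = x 4 * x 3 := by
    rw [descProd_eq_mul x (by norm_num)]
    exact congrArg (x 4 * ·) (descProd_self x 3)
  have last : primProd x 6 l = x 6 * x 4 * x 3 * descProd x 2 l := by
    rw [primProd_eq_mul x (by omega), descProd_eq_mul x (by omega), descProd_eq_mul x (by omega)]
    norm_num [mul_assoc]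
  have tail : Commute (x 5) (descProd x 2 l) :=
    commute_descProd fun i hli hi ↦ hcomm5 i hli (by omega) (by omega) (by omega)
  have path : SemiconjBy (x 4 * x 3 * x 5 * (x 6 * x 4 * x 3)) (x 5) (x 6) :=
    h53.semiconjBy_path h34 h46 (hcomm5 4 (by omega) (by omega) (by omega) (by omega))
      (hcomm5 6 (by omega) (by omega) (by omega) (by omega)) h36
  rw [head, last, ← mul_assoc]
  exact path.mul_left tail.symm

theorem E6_nu_general (hj : m ≤ j) (hj4 : j ≤ 4) (hk : m ≤ k) (hl : m ≤ l) (hl3 : l ≤ 3)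
    (h43 : BraidRel (x 4) (x 3)) (h53 : BraidRel (x 5) (x 3)) (h64 : BraidRel (x 6) (x 4))
    (hcomm5 : ∀ i, m ≤ i → i ≤ 6 → i ≠ 3 → i ≠ 5 → Commute (x 5) (x i))
    (hcomm6 : ∀ i, m ≤ i → i ≤ 6 → i ≠ 4 → i ≠ 6 → Commute (x 6) (x i)) :
    SemiconjBy (primProd x 6 j * primProd x 5 k * (descProd x 4 3 * x 5 * primProd x 6 l))
      (x 5) (x 4) := by
  have five_to_six : SemiconjBy (descProd x 4 3 * x 5 * primProd x 6 l) (x 5) (x 6) :=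
    semiconjBy_descProd_mul_primProd hl3 h53 h43.symm h64.symm
      (fun i hli ↦ hcomm5 i (hl.trans hli))
      (hcomm6 3 (by omega) (by omega) (by omega) (by omega)).symm
  have six_fixed : Commute (x 6) (primProd x 5 k) :=
    commute_primProd fun i hki hi hi4 ↦ hcomm6 i (hk.trans hki) (by omega) (by omega) (by omega)
  have six_to_four : SemiconjBy (primProd x 6 j) (x 6) (x 4) :=
    semiconjBy_primProd hj4 h64 fun i hji hi ↦
      hcomm6 i (hj.trans hji) (by omega) (by omega) (by omega)
  exact (six_to_four.mul_left six_fixed.symm).mul_left five_to_six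

end Diagram

theorem E6_nu (G : Type*) [Group G] (x : ℤ → G)
    (hsq : ∀ i : ℤ, 1 ≤ i → i ≤ 6 → x i ^ 2 = 1)
    (hbraid : ∀ i : ℤ, 1 ≤ i → i ≤ 3 → x (i+1) * x i * x (i+1) = x i * x (i+1) * x i)
    (h53 : x 5 * x 3 * x 5 = x 3 * x 5 * x 3)
    (h64 : x 6 * x 4 * x 6 = x 4 * x 6 * x 4)
    (hcomm : ∀ i j : ℤ, 1 ≤ j → j + 1 < i → i ≤ 4 → x i * x j = x j * x i)
    (hcomm5 : ∀ i : ℤ, 1 ≤ i → i ≤ 6 → i ≠ 3 → i ≠ 5 → x 5 * x i = x i * x 5)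
    (hcomm6 : ∀ i : ℤ, 1 ≤ i → i ≤ 6 → i ≠ 4 → i ≠ 6 → x 6 * x i = x i * x 6) :
    ∀ l : ℤ, 1 ≤ l → l ≤ 3 →
      primProd x 6 1 * primProd x 5 2 * descProd x 4 3 * x 5 * primProd x 6 l * x 5 =
      x 4 * primProd x 6 1 * primProd x 5 2 * descProd x 4 3 * x 5 * primProd x 6 l := by
  intro l hl1 hl3
  have carried := E6_nu_general (j := 1) (k := 2) le_rfl (by norm_num) (by norm_num) hl1 hl3
    (hbraid 3 (by norm_num) le_rfl) h53 h64 hcomm5 hcomm6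
  simpa only [SemiconjBy, mul_assoc] using carried
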